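/- Let Φ be an irreducible crystallographic root system consisting of long and short roots, δ the ratio between long and short roots, and L' := span_ℤ({δα^∨ | α ∈ Φ_l} ∪ {α^∨ | α ∈ Φ_s}). Then L' is invariant under the Weyl group: w(λ) ∈ L' for all w ∈ W_Φ and all λ ∈ L'. -/

import Mathlib

open scoped RealInnerProductSpace

noncomputable section

variable {V : Type*} [NormedAddCommGroup V] [InnerProductSpace ℝ V]

/-- The coroot `α^∨ = 2α/(α|α)` of a vector `α`. -/
def coroot (α : V) : V := (2 / ⟪α, α⟫) • α

/-- The affine reflection `s_{α,k} : v ↦ v - ((v|α) - k)α^∨`, as a function. -/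
def sAffFun (α : V) (k : ℝ) (v : V) : V := v - (⟪v, α⟫ - k) • coroot α

theorem sAffFun_involutive (α : V) (k : ℝ) : Function.Involutive (sAffFun α k) := by
  intro v
  by_cases h : α = 0
  · simp [sAffFun, coroot, h]
  · have h2 : ⟪α, α⟫ ≠ 0 := by
      intro hz
      exact h (inner_self_eq_zero.mp hz)
    have hr : ⟪coroot α, α⟫ = 2 := by
      simp only [coroot, real_inner_smul_left]
      field_simp
    simp only [sAffFun, inner_sub_left, real_inner_smul_left, hr]
    have : ⟪v, α⟫ - (⟪v, α⟫ - k) * 2 - k = -(⟪v, α⟫ - k) := by ring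
    rw [this, neg_smul, sub_neg_eq_add, sub_add_cancel]

/-- The affine reflection `s_{α,k}` as a permutation of `V`. -/
def sAff (α : V) (k : ℝ) : Equiv.Perm V :=
  Function.Involutive.toPerm _ (sAffFun_involutive α k)

/-- The translation `Tr(x) : v ↦ v + x`, as a function. -/
def trFun (x : V) (v : V) : V := v + x

/-- The translation `Tr(x) : v ↦ v + x`, as a permutation of `V`. -/
def trPerm (x : V) : Equiv.Perm V := Equiv.addRight x

/-- A crystallographic (reduced) root system in a Euclidean space `V`. -/
structure IsCrystRootSystem (Φ : Set V) : Prop where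
  finite : Φ.Finite
  nonempty : Φ.Nonempty
  ne_zero : ∀ α ∈ Φ, α ≠ 0
  spanning : Submodule.span ℝ Φ = ⊤
  refl_mem : ∀ α ∈ Φ, ∀ β ∈ Φ, sAffFun α 0 β ∈ Φ
  reduced : ∀ α ∈ Φ, ∀ c : ℝ, c • α ∈ Φ → c = 1 ∨ c = -1
  cryst : ∀ α ∈ Φ, ∀ β ∈ Φ, ∃ n : ℤ, 2 * ⟪β, α⟫ / ⟪α, α⟫ = (n : ℝ)

/-- The (finite) Weyl group of `Φ`, generated by the reflections `s_α`. -/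
def WeylGroup (Φ : Set V) : Subgroup (Equiv.Perm V) :=
  Subgroup.closure {g | ∃ α ∈ Φ, g = sAff α 0}

/-- The affine Weyl group of `Φ`, generated by all affine reflections `s_{α,k}`, `k ∈ ℤ`. -/
def AffWeylGroup (Φ : Set V) : Subgroup (Equiv.Perm V) :=
  Subgroup.closure {g | ∃ α ∈ Φ, ∃ k : ℤ, g = sAff α k}

/-- The set of reflections of the affine Weyl group. -/
def AffReflections (Φ : Set V) : Set (Equiv.Perm V) :=
  {g | ∃ α ∈ Φ, ∃ k : ℤ, g = sAff α k}

/-- The coweight lattice `P(Φ^∨) = {x | (x|α) ∈ ℤ for all α ∈ Φ}`. -/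
def coweightLattice (Φ : Set V) : Set V :=
  {x | ∀ α ∈ Φ, ∃ n : ℤ, ⟪x, α⟫ = (n : ℝ)}

/-- `Φ` is irreducible: it admits no decomposition into two nonempty orthogonal parts. -/
def IsIrreducibleRS (Φ : Set V) : Prop :=
  ∀ Φ₁ Φ₂ : Set V, Φ₁ ∪ Φ₂ = Φ → (∀ α ∈ Φ₁, ∀ β ∈ Φ₂, ⟪α, β⟫ = 0) →
    Φ₁ = ∅ ∨ Φ₂ = ∅

theorem sAffFun_add (α x y : V) : sAffFun α 0 (x + y) = sAffFun α 0 x + sAffFun α 0 y := by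
  simp only [sAffFun, inner_add_left, sub_zero, add_smul]
  abel

theorem sAffFun_smul (α : V) (c : ℝ) (x : V) : sAffFun α 0 (c • x) = c • sAffFun α 0 x := by
  simp only [sAffFun, real_inner_smul_left, sub_zero, smul_sub, smul_smul]

theorem sAffFun_norm (α x : V) : ⟪sAffFun α 0 x, sAffFun α 0 x⟫ = ⟪x, x⟫ := by
  by_cases h : α = 0
  · simp [sAffFun, coroot, h]
  · have h2 : ⟪α, α⟫ ≠ 0 := fun hz => h (inner_self_eq_zero.mp hz)
    simp only [sAffFun, coroot, inner_sub_left, inner_sub_right, real_inner_smul_left,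
      real_inner_smul_right, sub_zero, real_inner_comm x α]
    field_simp
    ring

theorem sAffFun_coroot (α x : V) : sAffFun α 0 (coroot x) = coroot (sAffFun α 0 x) := by
  conv_rhs => rw [coroot, sAffFun_norm]
  rw [coroot, sAffFun_smul]

theorem statement_14 (Φ : Set V) (hΦ : IsCrystRootSystem Φ) (hirr : IsIrreducibleRS Φ)
    (a b : ℝ) (hab : a < b)
    (hall : ∀ γ ∈ Φ, ⟪γ, γ⟫ = a ∨ ⟪γ, γ⟫ = b)
    (hshort : ∃ γ ∈ Φ, ⟪γ, γ⟫ = a) (hlong : ∃ γ ∈ Φ, ⟪γ, γ⟫ = b)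
    (w : Equiv.Perm V) (hw : w ∈ WeylGroup Φ) (lam : V)
    (hlam : lam ∈ Submodule.span ℤ
      (((fun γ => (b / a) • coroot γ) '' {γ ∈ Φ | ⟪γ, γ⟫ = b}) ∪
        (coroot '' {γ ∈ Φ | ⟪γ, γ⟫ = a}))) :
    w lam ∈ Submodule.span ℤ
      (((fun γ => (b / a) • coroot γ) '' {γ ∈ Φ | ⟪γ, γ⟫ = b}) ∪
        (coroot '' {γ ∈ Φ | ⟪γ, γ⟫ = a})) := by
  have key : ∀ α ∈ Φ, ∀ x ∈ Submodule.span ℤ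
      (((fun γ => (b / a) • coroot γ) '' {γ ∈ Φ | ⟪γ, γ⟫ = b}) ∪
        (coroot '' {γ ∈ Φ | ⟪γ, γ⟫ = a})), sAffFun α 0 x ∈ Submodule.span ℤ
      (((fun γ => (b / a) • coroot γ) '' {γ ∈ Φ | ⟪γ, γ⟫ = b}) ∪
        (coroot '' {γ ∈ Φ | ⟪γ, γ⟫ = a})) := by
    intro α hα x hx
    induction hx using Submodule.span_induction with
    | mem x hx =>
      apply Submodule.subset_span
      rcases hx with ⟨γ, ⟨hγ, hn⟩, rfl⟩ | ⟨γ, ⟨hγ, hn⟩, rfl⟩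
      · left
        refine ⟨sAffFun α 0 γ, ⟨hΦ.refl_mem α hα γ hγ, by rw [sAffFun_norm, hn]⟩, ?_⟩
        simp only [sAffFun_smul, sAffFun_coroot]
      · right
        exact ⟨sAffFun α 0 γ, ⟨hΦ.refl_mem α hα γ hγ, by rw [sAffFun_norm, hn]⟩,
          (sAffFun_coroot α γ).symm⟩
    | zero =>
      have : sAffFun α 0 (0 : V) = 0 := by simp [sAffFun]
      rw [this]
      exact Submodule.zero_mem _
    | add x y _ _ hx hy =>
      rw [sAffFun_add]
      exact Submodule.add_mem _ hx hy
    | smul n x _ hx =>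
      rw [← Int.cast_smul_eq_zsmul ℝ, sAffFun_smul, Int.cast_smul_eq_zsmul ℝ]
      exact Submodule.smul_mem _ n hx
  generalize Submodule.span ℤ
      (((fun γ => (b / a) • coroot γ) '' {γ ∈ Φ | ⟪γ, γ⟫ = b}) ∪
        (coroot '' {γ ∈ Φ | ⟪γ, γ⟫ = a})) = L at key hlam ⊢
  have main : ∀ x, w x ∈ L ↔ x ∈ L := by
    unfold WeylGroup at hw
    induction hw using Subgroup.closure_induction with
    | mem g hg =>
      obtain ⟨α, hα, rfl⟩ := hg
      intro x
      refine ⟨fun h => ?_, key α hα x⟩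
      have := key α hα _ h
      change sAffFun α 0 (sAffFun α 0 x) ∈ L at this
      rwa [sAffFun_involutive α 0 x] at this
    | one => intro x; rfl
    | mul g k _ _ hg hk => intro x; rw [Equiv.Perm.mul_apply, hg, hk]
    | inv g _ hg => intro x; rw [← hg, ← Equiv.Perm.mul_apply, mul_inv_cancel, Equiv.Perm.one_apply]
  exact (main lam).mpr hlam


end
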